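/- For every Boolean function f and every p ∈ [0,1/2], E_{ρ~R_p}[L₂(f↾ρ) + 1] ≤ (L₂(f) + 1)^{γ(2p)}, where L₂(f) is the minimum leaf-size of a depth-2 AC⁰ formula computing f and γ(q) = log_{2/(1-q)}((1+q)/(1-q)). -/

import Mathlib

noncomputable def rpWeight {n : ℕ} (p : ℝ) (ρ : Fin n → Option Bool) : ℝ :=
  ∏ i, if ρ i = none then p else (1 - p) / 2

def restrictFun {n : ℕ} {V : Type} (f : (Fin n → Bool) → V) (ρ : Fin n → Option Bool) :
    (Fin n → Bool) → V :=
  fun x => f (fun i => (ρ i).getD (x i))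

/-- Satisfaction of a conjunctive clause (AND of literals). -/
def andClauseSat {n : ℕ} (C : Fin n → Option Bool) (x : Fin n → Bool) : Prop :=
  ∀ i : Fin n, ∀ b : Bool, C i = some b → x i = b

/-- Satisfaction of a disjunctive clause (OR of literals). -/
def orClauseSat {n : ℕ} (C : Fin n → Option Bool) (x : Fin n → Bool) : Prop :=
  ∃ i : Fin n, ∃ b : Bool, C i = some b ∧ x i = b

def clauseWidth {n : ℕ} (C : Fin n → Option Bool) : ℕ :=
  (Finset.univ.filter (fun i => C i ≠ none)).card

/-- `L₂(f)`: minimum leaf-size (number of literal occurrences) of a depth-2 AC⁰ formula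
(a DNF or a CNF) computing `f`. -/
noncomputable def L2size {n : ℕ} (f : (Fin n → Bool) → Bool) : ℕ :=
  sInf {m |
    (∃ F : List (Fin n → Option Bool),
      (∀ x, f x = true ↔ ∃ C ∈ F, andClauseSat C x) ∧ (F.map clauseWidth).sum = m) ∨
    (∃ F : List (Fin n → Option Bool),
      (∀ x, f x = true ↔ ∀ C ∈ F, orClauseSat C x) ∧ (F.map clauseWidth).sum = m)}

/-- The shrinkage exponent `γ(q) = log_{2/(1-q)}((1+q)/(1-q))`, extended continuously
by `γ(1) = 1`. -/
noncomputable def gamma (q : ℝ) : ℝ :=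
  if q = 1 then 1 else Real.logb (2 / (1 - q)) ((1 + q) / (1 - q))


open Classical in
theorem aux_push {n : ℕ} {α β : Type} [Fintype α] [Fintype β] (h : Fin n → α → ℝ)
    (φ : Fin n → α → β) (G : (Fin n → β) → ℝ) :
    ∑ ρ : Fin n → α, (∏ i, h i (ρ i)) * G (fun i => φ i (ρ i))
      = ∑ τ : Fin n → β, G τ * ∏ i, ∑ s, if φ i s = τ i then h i s else 0 := by
  have key : ∀ τ : Fin n → β, (∏ i, ∑ s, if φ i s = τ i then h i s else 0)
      = ∑ ρ : Fin n → α, if (fun i => φ i (ρ i)) = τ then ∏ i, h i (ρ i) else 0 := by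
    intro τ
    rw [Finset.prod_univ_sum, Fintype.piFinset_univ]
    refine Finset.sum_congr rfl fun ρ _ => ?_
    by_cases hh : (fun i => φ i (ρ i)) = τ
    · rw [if_pos hh]
      refine Finset.prod_congr rfl fun i _ => ?_
      rw [if_pos (congrFun hh i)]
    · rw [if_neg hh]
      obtain ⟨i, hi⟩ : ∃ i, φ i (ρ i) ≠ τ i := by
        by_contra hc
        push Not at hc
        exact hh (funext hc)
      exact Finset.prod_eq_zero (Finset.mem_univ i) (if_neg hi)
  simp_rw [key, Finset.mul_sum]
  rw [Finset.sum_comm]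
  refine Finset.sum_congr rfl fun ρ _ => ?_
  simp [mul_comm]

theorem aux_prod {n : ℕ} {α : Type} [Fintype α] (h : Fin n → α → ℝ) :
    ∑ ρ : Fin n → α, ∏ i, h i (ρ i) = ∏ i, ∑ s, h i s := by
  classical
  rw [Finset.prod_univ_sum, Fintype.piFinset_univ]

theorem aux_rp_sum {n : ℕ} (p : ℝ) : ∑ ρ : Fin n → Option Bool, rpWeight p ρ = 1 := by
  unfold rpWeight
  rw [aux_prod (fun _ s => if s = none then p else (1 - p) / 2)]
  apply Finset.prod_eq_one
  intro i _
  simp [Fintype.sum_option]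
  ring

theorem aux_rp_nonneg {n : ℕ} {p : ℝ} (h0 : 0 ≤ p) (h1 : p ≤ 1) (ρ : Fin n → Option Bool) :
    0 ≤ rpWeight p ρ := by
  unfold rpWeight
  refine Finset.prod_nonneg fun i _ => ?_
  split_ifs
  · exact h0
  · linarith

def auxComp {n : ℕ} (σ τ : Fin n → Option Bool) : Fin n → Option Bool :=
  fun i => (σ i).or (τ i)

theorem aux_comp_sum {n : ℕ} (p : ℝ) (G : (Fin n → Option Bool) → ℝ) :
    ∑ ρ, rpWeight p ρ * G ρ
      = ∑ σ, rpWeight (2 * p) σ * ∑ τ, rpWeight (1 / 2) τ * G (auxComp σ τ) := by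
  classical
  have h := aux_push (n := n) (α := Option Bool × Option Bool) (β := Option Bool)
    (fun _ s => (if s.1 = none then 2 * p else (1 - 2 * p) / 2) *
      (if s.2 = none then 1 / 2 else (1 - 1 / 2) / 2))
    (fun _ s => s.1.or s.2) G
  have e1 : ∑ ρ, rpWeight p ρ * G ρ = ∑ τ : Fin n → Option Bool, G τ *
      ∏ i, ∑ s : Option Bool × Option Bool, if s.1.or s.2 = τ i then
        (if s.1 = none then 2 * p else (1 - 2 * p) / 2) *
        (if s.2 = none then 1 / 2 else (1 - 1 / 2) / 2) else 0 := by
    refine Finset.sum_congr rfl fun ρ _ => ?_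
    rw [mul_comm]
    congr 1
    unfold rpWeight
    refine Finset.prod_congr rfl fun i _ => ?_
    rw [Fintype.sum_prod_type]
    rcases ρ i with _ | _ | _ <;> simp [Fintype.sum_option] <;> ring
  rw [e1]
  refine Eq.trans ?_ (h.symm.trans ?_)
  · refine Finset.sum_congr rfl fun ρ _ => ?_
    congr 1
    refine Finset.prod_congr rfl fun i _ => Finset.sum_congr rfl fun s _ => ?_
    congr
  · rw [← (Equiv.arrowProdEquivProdArrow (Fin n) (fun _ => Option Bool) (fun _ => Option Bool)).symm.sum_comp,
      Fintype.sum_prod_type]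
    refine Finset.sum_congr rfl fun σ _ => ?_
    rw [Finset.mul_sum]
    refine Finset.sum_congr rfl fun τ _ => ?_
    simp only [Equiv.arrowProdEquivProdArrow, Equiv.coe_fn_symm_mk, Finset.prod_mul_distrib]
    rw [mul_assoc]
    rfl

def auxApp {n : ℕ} (ρ : Fin n → Option Bool) (x : Fin n → Bool) : Fin n → Bool :=
  fun i => (ρ i).getD (x i)

def auxCons {n : ℕ} (ρ C : Fin n → Option Bool) : Prop :=
  ∀ i b c, C i = some b → ρ i = some c → c = b

def auxRes {n : ℕ} (ρ C : Fin n → Option Bool) : Fin n → Option Bool :=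
  fun i => if ρ i = none then C i else none

theorem aux_sat_iff {n : ℕ} (ρ C : Fin n → Option Bool) (x : Fin n → Bool) :
    andClauseSat C (auxApp ρ x) ↔ auxCons ρ C ∧ andClauseSat (auxRes ρ C) x := by
  unfold andClauseSat auxApp auxCons auxRes
  constructor
  · intro h
    refine ⟨fun i b c h1 h2 => ?_, fun i b h1 => ?_⟩
    · simpa [h2] using h i b h1
    · by_cases hr : ρ i = none
      · simp [hr] at h1
        simpa [hr] using h i b h1
      · simp [hr] at h1
  · rintro ⟨h1, h2⟩ i b hb
    rcases hr : ρ i with _ | c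
    · have := h2 i b (by simp [hr, hb])
      simpa using this
    · simpa using h1 i b c hb hr

theorem aux_restrict_comp {n : ℕ} (f : (Fin n → Bool) → Bool) (σ τ : Fin n → Option Bool) :
    restrictFun f (auxComp σ τ) = restrictFun (restrictFun f σ) τ := by
  funext x
  unfold restrictFun auxComp
  congr 1
  funext i
  rcases σ i with _ | _ <;> simp

def auxUseful {n : ℕ} (C : ℕ → Fin n → Option Bool) (l : ℕ) (ρ : Fin n → Option Bool) : Prop :=
  ∃ x, andClauseSat (C l) (auxApp ρ x) ∧ ∀ j < l, ¬ andClauseSat (C j) (auxApp ρ x)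

def auxExt {n : ℕ} (ρ C : Fin n → Option Bool) : Prop := ∀ i b, C i = some b → ρ i = some b

theorem aux_useful_or {n : ℕ} (C : ℕ → Fin n → Option Bool) (l : ℕ) (ρ : Fin n → Option Bool)
    (h : auxUseful C l ρ) : auxCons ρ (C l) ∧ auxUseful C l (auxComp (C l) ρ) := by
  obtain ⟨x, h1, h2⟩ := h
  refine ⟨((aux_sat_iff _ _ _).1 h1).1, x, ?_⟩
  have e : auxApp (auxComp (C l) ρ) x = auxApp ρ x := by
    funext i
    rcases hc : C l i with _ | b
    · simp [auxApp, auxComp, hc]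
    · have := h1 i b hc
      simp only [auxApp] at this ⊢
      simp [auxComp, hc, this]
  rw [e]
  exact ⟨h1, h2⟩

theorem aux_disj {n : ℕ} (C : ℕ → Fin n → Option Bool) (l l' : ℕ) (hl : l < l')
    (ρ : Fin n → Option Bool) (h : auxExt ρ (C l)) (h' : auxUseful C l' ρ) : False := by
  obtain ⟨x, _, h2⟩ := h'
  refine h2 l hl fun i b hb => ?_
  simp [auxApp, h i b hb]

open Classical in
theorem aux_ext_prob {n : ℕ} (q : ℝ) (C : Fin n → Option Bool) :
    ∑ ρ, rpWeight q ρ * (if auxExt ρ C then (1:ℝ) else 0) = ((1 - q) / 2) ^ clauseWidth C := by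
  have e : ∀ ρ, rpWeight q ρ * (if auxExt ρ C then (1:ℝ) else 0)
      = ∏ i, (fun i s => if C i = none ∨ s = C i then (if s = none then q else (1 - q) / 2) else 0) i (ρ i) := by
    intro ρ
    by_cases h : auxExt ρ C
    · rw [if_pos h, mul_one]
      refine Finset.prod_congr rfl fun i _ => ?_
      have : C i = none ∨ ρ i = C i := by
        rcases hc : C i with _ | b
        · simp
        · right; exact h i b hc
      simp only [if_pos this]
    · rw [if_neg h, mul_zero]
      unfold auxExt at h
      push Not at h
      obtain ⟨i, b, h1, h2⟩ := h
      symm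
      apply Finset.prod_eq_zero (Finset.mem_univ i)
      simp [h1, h2]
  simp_rw [e]
  rw [aux_prod (fun i s => if C i = none ∨ s = C i then (if s = none then q else (1 - q) / 2) else 0)]
  unfold clauseWidth
  rw [← Finset.prod_const, Finset.prod_filter]
  refine Finset.prod_congr rfl fun i _ => ?_
  rcases C i with _ | _ | _ <;> simp [Fintype.sum_option]
  ring

open Classical in
theorem aux_useful_prob {n : ℕ} (q : ℝ) (h0 : 0 ≤ q) (h1 : q < 1) (C : ℕ → Fin n → Option Bool) (l : ℕ) :
    ∑ ρ, rpWeight q ρ * (if auxUseful C l ρ then (1:ℝ) else 0)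
      ≤ ((1 + q) / (1 - q)) ^ clauseWidth (C l) *
        ∑ ρ, rpWeight q ρ * (if auxUseful C l ρ ∧ auxExt ρ (C l) then (1:ℝ) else 0) := by
  have hq : (1 - q) ≠ 0 := by linarith
  have hP := aux_push (n := n) (α := Option Bool) (β := Option Bool)
    (fun i s => if C l i = none ∨ s = none ∨ s = C l i then (if s = none then q else (1 - q) / 2) else 0)
    (fun i s => (C l i).or s) (fun τ => if auxUseful C l τ then (1:ℝ) else 0)
  calc _ ≤ _ := ?_
    _ = _ := hP
    _ = _ := ?_
  · refine Finset.sum_le_sum fun ρ _ => ?_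
    have nn : 0 ≤ ∏ i, (if C l i = none ∨ ρ i = none ∨ ρ i = C l i then (if ρ i = none then q else (1 - q) / 2) else 0) := by
      refine Finset.prod_nonneg fun i _ => ?_
      split_ifs <;> linarith
    by_cases hu : auxUseful C l ρ
    · obtain ⟨a, b⟩ := aux_useful_or C l ρ hu
      have b' : auxUseful C l (fun i => (C l i).or (ρ i)) := b
      rw [if_pos hu, if_pos b', mul_one, mul_one]
      apply le_of_eq
      refine Finset.prod_congr rfl fun i _ => ?_
      have hcc : C l i = none ∨ ρ i = none ∨ ρ i = C l i := by
        rcases hc : C l i with _ | c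
        · simp
        · rcases hr : ρ i with _ | d
          · simp
          · simp [a i c d hc hr]
      rw [if_pos hcc]
    · rw [if_neg hu, mul_zero]
      apply mul_nonneg nn
      split_ifs <;> simp
  · rw [Finset.mul_sum]
    refine Finset.sum_congr rfl fun τ _ => ?_
    by_cases hu : auxUseful C l τ
    swap
    · simp [hu]
    by_cases he : auxExt τ (C l)
    · rw [if_pos hu, if_pos ⟨hu, he⟩, one_mul, mul_one]
      unfold clauseWidth rpWeight
      rw [← Finset.prod_const, Finset.prod_filter, ← Finset.prod_mul_distrib]
      refine Finset.prod_congr rfl fun i _ => ?_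
      rcases hc : C l i with _ | c
      · rcases τ i with _ | _ | _ <;> simp [Fintype.sum_option]
      · rw [he i c hc]
        rcases c with _ | _ <;> simp [Fintype.sum_option] <;> field_simp <;> ring
    · rw [if_pos hu, if_neg (fun h => he h.2), one_mul, mul_zero, mul_zero]
      unfold auxExt at he
      push Not at he
      obtain ⟨i, b, h1, h2⟩ := he
      apply Finset.prod_eq_zero (Finset.mem_univ i)
      refine Finset.sum_eq_zero fun s _ => ?_
      rw [if_neg]
      simp [h1, Ne.symm h2]

theorem aux_gamma {q : ℝ} (h0 : 0 ≤ q) (h1 : q ≤ 1) : 0 ≤ gamma q ∧ gamma q ≤ 1 := by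
  unfold gamma
  split_ifs with h
  · norm_num
  · have h2 : 0 < 1 - q := by
      have := lt_of_le_of_ne h1 h
      linarith
    have hb : 1 < 2 / (1 - q) := by rw [lt_div_iff₀ h2]; linarith
    have ha : 1 ≤ (1 + q) / (1 - q) := by rw [le_div_iff₀ h2]; linarith
    refine ⟨Real.logb_nonneg hb ha, ?_⟩
    rw [Real.logb_le_iff_le_rpow hb (by linarith), Real.rpow_one]
    gcongr
    linarith

open Classical in
theorem aux_DL {n : ℕ} (q : ℝ) (h0 : 0 ≤ q) (h1 : q ≤ 1) (C : ℕ → Fin n → Option Bool) (M : ℕ)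
    (hM : 1 ≤ M) :
    ∑ l ∈ Finset.range M, ∑ ρ, rpWeight q ρ * (if auxUseful C l ρ then (1:ℝ) else 0)
      ≤ (M : ℝ) ^ gamma q := by
  obtain ⟨g0, g1⟩ := aux_gamma h0 h1
  have hM0 : (0:ℝ) < M := by exact_mod_cast hM
  by_cases hq : q = 1
  · have : gamma q = 1 := by simp [gamma, hq]
    rw [this, Real.rpow_one]
    calc _ ≤ ∑ l ∈ Finset.range M, (1:ℝ) := by
          refine Finset.sum_le_sum fun l _ => ?_
          refine le_trans ?_ (aux_rp_sum (n := n) q).le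
          refine Finset.sum_le_sum fun ρ _ => ?_
          have := aux_rp_nonneg h0 h1 ρ
          split_ifs <;> simp [this]
      _ = M := by simp
  have h1' : q < 1 := lt_of_le_of_ne h1 hq
  have hβ : 0 < (1 - q) / 2 := by linarith
  set γ := gamma q with hγ
  have hlam : ((1 - q) / 2) ^ (-γ) = (1 + q) / (1 - q) := by
    rw [Real.rpow_neg hβ.le, ← Real.inv_rpow hβ.le, inv_div, hγ]
    unfold gamma
    rw [if_neg hq]
    have h2 : 0 < 1 - q := by linarith
    apply Real.rpow_logb
    · positivity
    · apply ne_of_gt; rw [lt_div_iff₀ h2]; linarith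
    · positivity
  let b : ℕ → ℝ := fun l => ∑ ρ, rpWeight q ρ * (if auxUseful C l ρ ∧ auxExt ρ (C l) then (1:ℝ) else 0)
  have hb0 : ∀ l, 0 ≤ b l := fun l => Finset.sum_nonneg fun ρ _ =>
    mul_nonneg (aux_rp_nonneg h0 h1 ρ) (by split_ifs <;> simp)
  have hbk : ∀ l, b l ≤ ((1 - q) / 2) ^ clauseWidth (C l) := by
    intro l
    rw [← aux_ext_prob]
    refine Finset.sum_le_sum fun ρ _ => ?_
    apply mul_le_mul_of_nonneg_left _ (aux_rp_nonneg h0 h1 ρ)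
    by_cases h : auxExt ρ (C l)
    · simp only [h, and_true, if_true]
      split_ifs <;> simp
    · simp [h]
  have hsum : ∑ l ∈ Finset.range M, b l ≤ 1 := by
    rw [Finset.sum_comm]
    refine le_trans ?_ (aux_rp_sum (n := n) q).le
    refine Finset.sum_le_sum fun ρ _ => ?_
    rw [← Finset.mul_sum]
    apply mul_le_of_le_one_right (aux_rp_nonneg h0 h1 ρ)
    rw [Finset.sum_boole]
    have : (Finset.filter (fun l => auxUseful C l ρ ∧ auxExt ρ (C l)) (Finset.range M)).card ≤ 1 := by
      rw [Finset.card_le_one]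
      intro a ha c hc
      simp only [Finset.mem_filter] at ha hc
      rcases lt_trichotomy a c with h | h | h
      · exact (aux_disj C a c h ρ ha.2.2 hc.2.1).elim
      · exact h
      · exact (aux_disj C c a h ρ hc.2.2 ha.2.1).elim
    exact_mod_cast this
  have hterm : ∀ l, ∑ ρ, rpWeight q ρ * (if auxUseful C l ρ then (1:ℝ) else 0) ≤ b l ^ (1 - γ) := by
    intro l
    refine (aux_useful_prob q h0 h1' C l).trans ?_
    change _ * b l ≤ _
    rcases (hb0 l).eq_or_lt with h | h
    · rw [← h, mul_zero]
      exact Real.rpow_nonneg le_rfl _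
    · rw [sub_eq_neg_add 1 γ, Real.rpow_add h, Real.rpow_one]
      apply mul_le_mul_of_nonneg_right _ h.le
      calc _ = (((1 - q) / 2) ^ clauseWidth (C l)) ^ (-γ) := by
            rw [← hlam, ← Real.rpow_natCast, ← Real.rpow_natCast, ← Real.rpow_mul hβ.le,
              ← Real.rpow_mul hβ.le, mul_comm]
        _ ≤ _ := Real.rpow_le_rpow_of_nonpos h (hbk l) (by linarith)
  refine (Finset.sum_le_sum fun l _ => hterm l).trans ?_
  have hMg : (0:ℝ) < (M:ℝ) ^ γ := Real.rpow_pos_of_pos hM0 _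
  have hag : ∀ l, b l ^ (1 - γ) * ((M:ℝ) ^ γ)⁻¹ ≤ (1 - γ) * b l + γ * (M:ℝ)⁻¹ := by
    intro l
    rw [← Real.inv_rpow hM0.le]
    exact Real.geom_mean_le_arith_mean2_weighted (by linarith) g0 (hb0 l) (by positivity) (by ring)
  have := Finset.sum_le_sum fun l (_ : l ∈ Finset.range M) => hag l
  rw [← Finset.sum_mul, Finset.sum_add_distrib, ← Finset.mul_sum, Finset.sum_const, Finset.card_range,
    nsmul_eq_mul] at this
  have e : (M:ℝ) * (γ * (M:ℝ)⁻¹) = γ := by field_simp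
  rw [e, ← div_eq_mul_inv, div_le_iff₀ hMg] at this
  refine this.trans ?_
  apply mul_le_of_le_one_left hMg.le
  nlinarith

theorem aux_L2_le {n : ℕ} (f : (Fin n → Bool) → Bool) (F : List (Fin n → Option Bool))
    (h : ∀ x, f x = true ↔ ∃ C ∈ F, andClauseSat C x) : L2size f ≤ (F.map clauseWidth).sum :=
  Nat.sInf_le (Or.inl ⟨F, h, rfl⟩)

theorem aux_L2_true {n : ℕ} (f : (Fin n → Bool) → Bool) (h : ∀ x, f x = true) : L2size f = 0 := by
  apply Nat.le_zero.1
  exact Nat.sInf_le (Or.inr ⟨[], by simp [h], by simp⟩)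

theorem aux_num (k : ℕ) : (k : ℝ) * ((2 / 3) * (3 / 4) ^ k) ≤ 1 := by
  rcases Nat.lt_or_ge k 3 with h | h
  · interval_cases k <;> norm_num
  · induction k, h using Nat.le_induction with
    | base => norm_num
    | succ k hk ih =>
      have h3 : (3:ℝ) ≤ k := by exact_mod_cast hk
      have hp : (0:ℝ) < (3 / 4) ^ k := by positivity
      rw [pow_succ]
      push_cast
      nlinarith [mul_nonneg (sub_nonneg.2 h3) hp.le]

open Classical in
theorem aux_half {n : ℕ} (C : Fin n → Option Bool) :
    ∑ τ, rpWeight (1 / 2) τ * (if auxCons τ C then (clauseWidth (auxRes τ C) : ℝ) else 0) ≤ 1 := by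
  let S := Finset.univ.filter (fun i => C i ≠ none)
  let h : Fin n → Fin n → Option Bool → ℝ := fun i j s =>
    if (j = i → s = none) ∧ (C j = none ∨ s = none ∨ s = C j) then
      (if s = none then 1 / 2 else (1 - 1 / 2) / 2) else 0
  have hh0 : ∀ i j s, 0 ≤ h i j s := by
    intro i j s
    simp only [h]
    split_ifs <;> norm_num
  have e1 : ∀ τ : Fin n → Option Bool,
      rpWeight (1 / 2) τ * (if auxCons τ C then (clauseWidth (auxRes τ C) : ℝ) else 0)
        ≤ ∑ i ∈ S, ∏ j, h i j (τ j) := by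
    intro τ
    have nn : ∀ i, 0 ≤ ∏ j, h i j (τ j) := fun i => Finset.prod_nonneg fun j _ => hh0 i j _
    by_cases hc : auxCons τ C
    · rw [if_pos hc]
      have ew : clauseWidth (auxRes τ C) = (S.filter (fun i => τ i = none)).card := by
        unfold clauseWidth auxRes
        congr 1
        ext i
        simp [S, and_comm]
      rw [ew, Finset.card_filter]
      push_cast
      rw [Finset.mul_sum]
      refine Finset.sum_le_sum fun i _ => ?_
      by_cases hi : τ i = none
      · rw [if_pos hi, mul_one]
        apply le_of_eq
        refine Finset.prod_congr rfl fun j _ => ?_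
        simp only [h]
        have hcc : (j = i → τ j = none) ∧ (C j = none ∨ τ j = none ∨ τ j = C j) := by
          refine ⟨fun e => e ▸ hi, ?_⟩
          rcases hcj : C j with _ | c
          · simp
          · rcases hr : τ j with _ | d
            · simp
            · simp [hc j c d hcj hr]
        rw [if_pos hcc]
      · rw [if_neg hi, mul_zero]
        exact nn i
    · rw [if_neg hc, mul_zero]
      exact Finset.sum_nonneg fun i _ => nn i
  refine (Finset.sum_le_sum fun τ _ => e1 τ).trans ?_
  rw [Finset.sum_comm]
  have e2 : ∀ i ∈ S, ∑ τ : Fin n → Option Bool, ∏ j, h i j (τ j) = (2 / 3) * (3 / 4) ^ S.card := by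
    intro i hi
    rw [aux_prod (h i)]
    have hi' : C i ≠ none := by simpa [S] using hi
    have e3 : ∀ j, ∑ s, h i j s = (if j = i then 2 / 3 else 1) * (if C j ≠ none then 3 / 4 else 1) := by
      intro j
      by_cases hj : j = i
      · subst hj
        simp only [h, if_true, if_pos hi']
        rcases C j with _ | _ | _ <;> simp [Fintype.sum_option] <;> norm_num
      · simp only [h, hj]
        rcases C j with _ | _ | _ <;> simp [Fintype.sum_option] <;> norm_num
    simp_rw [e3]
    rw [Finset.prod_mul_distrib, Finset.prod_ite_eq' Finset.univ i (fun _ => (2 / 3 : ℝ)),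
      if_pos (Finset.mem_univ i), ← Finset.prod_filter, Finset.prod_const]
  rw [Finset.sum_congr rfl e2, Finset.sum_const, nsmul_eq_mul]
  exact aux_num _

theorem aux_half_list {n : ℕ} (g : (Fin n → Bool) → Bool) (G : List (Fin n → Option Bool))
    (hG : ∀ x, g x = true ↔ ∃ C ∈ G, andClauseSat C x) :
    ∑ τ, rpWeight (1 / 2) τ * (L2size (restrictFun g τ) : ℝ) ≤ G.length := by
  classical
  have h1 : ∀ τ, L2size (restrictFun g τ)
      ≤ (((G.filter (fun C => auxCons τ C)).map (auxRes τ)).map clauseWidth).sum := by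
    intro τ
    apply aux_L2_le
    intro x
    change g (auxApp τ x) = true ↔ _
    rw [hG]
    simp_rw [aux_sat_iff]
    simp [and_assoc]
  have h2 : ∀ (G : List (Fin n → Option Bool)), ∑ τ, rpWeight (1 / 2) τ *
      (((((G.filter (fun C => auxCons τ C)).map (auxRes τ)).map clauseWidth).sum : ℕ) : ℝ) ≤ G.length := by
    intro G
    induction G with
    | nil => simp
    | cons C G ih =>
      have := add_le_add ih (aux_half C)
      rw [← Finset.sum_add_distrib] at this
      rw [List.length_cons, Nat.cast_succ]
      refine le_trans (le_of_eq ?_) this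
      refine Finset.sum_congr rfl fun τ _ => ?_
      rw [← mul_add]
      congr 1
      by_cases hc : auxCons τ C
      · simp [List.filter_cons, hc, add_comm]
      · simp [List.filter_cons, hc]
  refine le_trans (Finset.sum_le_sum fun τ _ => ?_) (h2 G)
  apply mul_le_mul_of_nonneg_left _ (aux_rp_nonneg (by norm_num) (by norm_num) τ)
  exact_mod_cast h1 τ

open Classical in
theorem aux_step {n : ℕ} (f : (Fin n → Bool) → Bool) (C : ℕ → Fin n → Option Bool) (m : ℕ)
    (hC : ∀ x, f x = true ↔ ∃ l < m, andClauseSat (C l) x) (hm : ∀ x, andClauseSat (C m) x)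
    (σ : Fin n → Option Bool) :
    ∑ τ, rpWeight (1 / 2) τ * ((L2size (restrictFun f (auxComp σ τ)) : ℝ) + 1)
      ≤ ∑ l ∈ Finset.range (m + 1), (if auxUseful C l σ then (1:ℝ) else 0) := by
  simp_rw [mul_add, Finset.sum_add_distrib, mul_one, aux_rp_sum]
  -- first satisfied clause
  have first : ∀ x, ∃ l ≤ m, andClauseSat (C l) (auxApp σ x) ∧
      ∀ j < l, ¬ andClauseSat (C j) (auxApp σ x) := by
    intro x
    have hex : ∃ l, andClauseSat (C l) (auxApp σ x) := ⟨m, hm _⟩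
    exact ⟨Nat.find hex, Nat.find_min' hex (hm _), Nat.find_spec hex, fun j hj => Nat.find_min hex hj⟩
  by_cases hu : auxUseful C m σ
  · rw [Finset.sum_range_succ, if_pos hu]
    apply add_le_add_left
    simp_rw [aux_restrict_comp]
    let G := ((List.range m).filter (fun l => auxUseful C l σ)).map (fun l => auxRes σ (C l))
    have hG : ∀ x, restrictFun f σ x = true ↔ ∃ D ∈ G, andClauseSat D x := by
      intro x
      change f (auxApp σ x) = true ↔ _
      rw [hC]
      constructor
      · rintro ⟨l, hl, hs⟩
        obtain ⟨k, hk, h1, h2⟩ := first x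
        have hkl : k ≤ l := by
          by_contra hc
          exact h2 l (by omega) hs
        refine ⟨auxRes σ (C k), ?_, ((aux_sat_iff _ _ _).1 h1).2⟩
        simp only [G, List.mem_map, List.mem_filter, List.mem_range, decide_eq_true_eq]
        exact ⟨k, ⟨by omega, x, h1, h2⟩, rfl⟩
      · rintro ⟨D, hD, hs⟩
        simp only [G, List.mem_map, List.mem_filter, List.mem_range, decide_eq_true_eq] at hD
        obtain ⟨l, ⟨hl, y, hy, _⟩, rfl⟩ := hD
        exact ⟨l, hl, (aux_sat_iff _ _ _).2 ⟨((aux_sat_iff _ _ _).1 hy).1, hs⟩⟩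
    refine (aux_half_list _ G hG).trans (le_of_eq ?_)
    rw [Finset.sum_boole]
    simp only [G, List.length_map]
    norm_cast
  · have ht : ∀ x, f (auxApp σ x) = true := by
      intro x
      by_contra hx
      rw [hC] at hx
      push Not at hx
      exact hu ⟨x, hm _, hx⟩
    have hz : ∀ τ, L2size (restrictFun f (auxComp σ τ)) = 0 := by
      intro τ
      apply aux_L2_true
      intro x
      rw [aux_restrict_comp]
      exact ht _
    simp only [hz, Nat.cast_zero, mul_zero, Finset.sum_const_zero, zero_add]
    obtain ⟨k, hk, h1, h2⟩ := first (fun _ => true)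
    have hk' : auxUseful C k σ := ⟨_, h1, h2⟩
    calc (1:ℝ) = if auxUseful C k σ then (1:ℝ) else 0 := by rw [if_pos hk']
      _ ≤ _ := Finset.single_le_sum (f := fun l => if auxUseful C l σ then (1:ℝ) else 0)
        (fun l _ => by split_ifs <;> simp) (Finset.mem_range.2 (by omega))

theorem aux_dnf_case {n : ℕ} (f : (Fin n → Bool) → Bool) (p : ℝ)
    (hp0 : 0 ≤ p) (hp1 : p ≤ 1 / 2) (F : List (Fin n → Option Bool))
    (hF : ∀ x, f x = true ↔ ∃ C ∈ F, andClauseSat C x) :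
    ∑ ρ : Fin n → Option Bool, rpWeight p ρ * ((L2size (restrictFun f ρ) : ℝ) + 1)
      ≤ ((((F.map clauseWidth).sum : ℕ) : ℝ) + 1) ^ gamma (2 * p) := by
  classical
  obtain ⟨g0, g1⟩ := aux_gamma (q := 2 * p) (by linarith) (by linarith)
  by_cases hw : ∃ C ∈ F, clauseWidth C = 0
  · obtain ⟨C, hC, hC0⟩ := hw
    have ht : ∀ x, f x = true := by
      intro x
      refine (hF x).2 ⟨C, hC, fun i b hb => ?_⟩
      unfold clauseWidth at hC0
      rw [Finset.card_eq_zero, Finset.filter_eq_empty_iff] at hC0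
      exact absurd hb (by have := hC0 (Finset.mem_univ i); simp at this; simp [this])
    have hz : ∀ ρ, L2size (restrictFun f ρ) = 0 := fun ρ => aux_L2_true _ fun x => ht _
    simp only [hz, Nat.cast_zero, zero_add, mul_one, aux_rp_sum]
    exact Real.one_le_rpow (le_add_of_nonneg_left (Nat.cast_nonneg _)) g0
  · push Not at hw
    have hlen : F.length ≤ (F.map clauseWidth).sum := by
      have : ∀ F : List (Fin n → Option Bool), (∀ C ∈ F, clauseWidth C ≠ 0) →
          F.length ≤ (F.map clauseWidth).sum := by
        intro F
        induction F with
        | nil => simp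
        | cons C F ih =>
          intro h
          have h1 := ih fun D hD => h D (List.mem_cons_of_mem _ hD)
          have h2 := h C List.mem_cons_self
          simp only [List.length_cons, List.map_cons, List.sum_cons]
          omega
      exact this F hw
    let C : ℕ → Fin n → Option Bool := fun l => F.getD l (fun _ => none)
    have hC : ∀ x, f x = true ↔ ∃ l < F.length, andClauseSat (C l) x := by
      intro x
      rw [hF]
      constructor
      · rintro ⟨D, hD, hs⟩
        obtain ⟨l, hl, rfl⟩ := List.getElem_of_mem hD
        exact ⟨l, hl, by simpa [C, hl] using hs⟩
      · rintro ⟨l, hl, hs⟩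
        exact ⟨F[l], List.getElem_mem hl, by simpa [C, hl] using hs⟩
    have hm : ∀ x, andClauseSat (C F.length) x := by
      intro x i b hb
      simp [C] at hb
    rw [aux_comp_sum]
    have h1 := aux_DL (n := n) (2 * p) (by linarith) (by linarith) C (F.length + 1) (by omega)
    calc _ ≤ ∑ σ, rpWeight (2 * p) σ * ∑ l ∈ Finset.range (F.length + 1),
            (if auxUseful C l σ then (1:ℝ) else 0) := by
          refine Finset.sum_le_sum fun σ _ => ?_
          exact mul_le_mul_of_nonneg_left (aux_step f C F.length hC hm σ)
            (aux_rp_nonneg (by linarith) (by linarith) σ)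
      _ = ∑ l ∈ Finset.range (F.length + 1), ∑ σ, rpWeight (2 * p) σ *
            (if auxUseful C l σ then (1:ℝ) else 0) := by
          simp_rw [Finset.mul_sum]
          rw [Finset.sum_comm]
      _ ≤ _ := h1
      _ ≤ _ := by
          apply Real.rpow_le_rpow (by positivity) _ g0
          exact_mod_cast Nat.succ_le_succ hlen

def auxNeg {n : ℕ} (C : Fin n → Option Bool) : Fin n → Option Bool := fun i => (C i).map (! ·)

theorem aux_neg_width {n : ℕ} (C : Fin n → Option Bool) : clauseWidth (auxNeg C) = clauseWidth C := by
  simp [clauseWidth, auxNeg]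

theorem aux_neg_neg {n : ℕ} (C : Fin n → Option Bool) : auxNeg (auxNeg C) = C := by
  funext i
  rcases h : C i with _ | _ | _ <;> simp [auxNeg, h]

theorem aux_neg_or {n : ℕ} (C : Fin n → Option Bool) (x : Fin n → Bool) :
    andClauseSat (auxNeg C) x ↔ ¬ orClauseSat C x := by
  unfold andClauseSat orClauseSat auxNeg
  push Not
  refine forall_congr' fun i => ?_
  rcases h : C i with _ | _ | _ <;> simp

theorem aux_neg_and {n : ℕ} (C : Fin n → Option Bool) (x : Fin n → Bool) :
    orClauseSat (auxNeg C) x ↔ ¬ andClauseSat C x := by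
  have := aux_neg_or (auxNeg C) x
  rw [aux_neg_neg] at this
  rw [this, not_not]

theorem aux_not_dnf {n : ℕ} (f : (Fin n → Bool) → Bool) (F : List (Fin n → Option Bool))
    (h : ∀ x, f x = true ↔ ∀ C ∈ F, orClauseSat C x) :
    ∀ x, (! f x) = true ↔ ∃ C ∈ F.map auxNeg, andClauseSat C x := by
  intro x
  have := h x
  simp only [List.mem_map, exists_exists_and_eq_and, aux_neg_or]
  rw [Bool.not_eq_true', ← Bool.not_eq_true, this]
  push Not
  rfl

theorem aux_not_cnf {n : ℕ} (f : (Fin n → Bool) → Bool) (F : List (Fin n → Option Bool))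
    (h : ∀ x, f x = true ↔ ∃ C ∈ F, andClauseSat C x) :
    ∀ x, (! f x) = true ↔ ∀ C ∈ F.map auxNeg, orClauseSat C x := by
  intro x
  have := h x
  simp only [List.mem_map, forall_exists_index, and_imp, forall_apply_eq_imp_iff₂, aux_neg_and]
  rw [Bool.not_eq_true', ← Bool.not_eq_true, this]
  push Not
  rfl

theorem aux_map_width {n : ℕ} (F : List (Fin n → Option Bool)) :
    ((F.map auxNeg).map clauseWidth).sum = (F.map clauseWidth).sum := by
  rw [List.map_map]
  congr 2
  funext C
  exact aux_neg_width C

theorem aux_nonempty {n : ℕ} (f : (Fin n → Bool) → Bool) :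
    ∃ F : List (Fin n → Option Bool), ∀ x, f x = true ↔ ∃ C ∈ F, andClauseSat C x := by
  classical
  refine ⟨((Finset.univ.filter (fun x => f x = true)).toList).map (fun y i => some (y i)), fun x => ?_⟩
  simp only [List.mem_map, Finset.mem_toList, Finset.mem_filter, Finset.mem_univ, true_and,
    exists_exists_and_eq_and]
  constructor
  · intro h
    exact ⟨x, h, fun i b hb => by simpa using hb⟩
  · rintro ⟨y, hy, hs⟩
    have : x = y := funext fun i => hs i (y i) rfl
    rwa [this]

theorem aux_L2_spec {n : ℕ} (f : (Fin n → Bool) → Bool) :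
    (∃ F : List (Fin n → Option Bool),
      (∀ x, f x = true ↔ ∃ C ∈ F, andClauseSat C x) ∧ (F.map clauseWidth).sum = L2size f) ∨
    (∃ F : List (Fin n → Option Bool),
      (∀ x, f x = true ↔ ∀ C ∈ F, orClauseSat C x) ∧ (F.map clauseWidth).sum = L2size f) := by
  obtain ⟨F, hF⟩ := aux_nonempty f
  exact Nat.sInf_mem (s := {m |
    (∃ F : List (Fin n → Option Bool),
      (∀ x, f x = true ↔ ∃ C ∈ F, andClauseSat C x) ∧ (F.map clauseWidth).sum = m) ∨
    (∃ F : List (Fin n → Option Bool),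
      (∀ x, f x = true ↔ ∀ C ∈ F, orClauseSat C x) ∧ (F.map clauseWidth).sum = m)})
    ⟨_, Or.inl ⟨F, hF, rfl⟩⟩

theorem aux_L2_not_le {n : ℕ} (f : (Fin n → Bool) → Bool) : L2size (fun x => ! f x) ≤ L2size f := by
  rcases aux_L2_spec f with ⟨F, hF, e⟩ | ⟨F, hF, e⟩
  · exact Nat.sInf_le (Or.inr ⟨F.map auxNeg, aux_not_cnf f F hF, by rw [aux_map_width, e]⟩)
  · exact Nat.sInf_le (Or.inl ⟨F.map auxNeg, aux_not_dnf f F hF, by rw [aux_map_width, e]⟩)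

theorem aux_L2_not {n : ℕ} (f : (Fin n → Bool) → Bool) : L2size (fun x => ! f x) = L2size f := by
  refine le_antisymm (aux_L2_not_le f) ?_
  simpa using aux_L2_not_le (fun x => ! f x)

/-- Shrinkage of depth-2 formula leaf-size: for `p ∈ [0,1/2]`,
`E[L₂(f↾R_p) + 1] ≤ (L₂(f) + 1)^{γ(2p)}`. -/
theorem depth2_leafsize_shrinkage {n : ℕ} (f : (Fin n → Bool) → Bool) (p : ℝ)
    (hp0 : 0 ≤ p) (hp1 : p ≤ 1 / 2) :
    ∑ ρ : Fin n → Option Bool, rpWeight p ρ * ((L2size (restrictFun f ρ) : ℝ) + 1)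
      ≤ ((L2size f : ℝ) + 1) ^ gamma (2 * p) := by
  rcases aux_L2_spec f with ⟨F, hF, e⟩ | ⟨F, hF, e⟩
  · rw [← e]
    exact aux_dnf_case f p hp0 hp1 F hF
  · have h := aux_dnf_case (fun x => ! f x) p hp0 hp1 _ (aux_not_dnf f F hF)
    rw [aux_map_width, e] at h
    refine le_trans (le_of_eq ?_) h
    refine Finset.sum_congr rfl fun ρ _ => ?_
    have e2 := aux_L2_not (restrictFun f ρ)
    rw [← e2]
    rfl
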